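/- Let X ~ N(θ, σ²I_d) in ℝᵈ with d ≥ 3. The James–Stein estimator δ_JS(X) = (1 − (d−2)σ²/‖X‖²)X satisfies E[‖δ_JS(X) − θ‖²] = dσ² − (d−2)²σ⁴ E[1/‖X‖²] < dσ² = E[‖X − θ‖²] for every θ ∈ ℝᵈ; hence δ(X) = X is inadmissible under squared error loss. -/

import Mathlib

open MeasureTheory ProbabilityTheory

/-!
Gaussian integration by parts in one variable at a time gives Stein's identity
`E[(X_j - θ_j) f(X)] = v E[∂_j f(X)]`. Along almost every line parallel to a coordinate axis the
field `x ↦ x / ‖x‖²` is smooth, and its divergence is `(d - 2) / ‖x‖²`, so no regularization at the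
origin is needed once `E[1 / ‖X‖²] < ∞`. That finiteness follows from AM-GM: `1 / ‖x‖²` is at most
`d⁻¹ ∏ |x_i| ^ (-2/d)`, whose factors are independent and integrable because `2 / d < 1`. Expanding
the square, the risk of `(1 - c / ‖X‖²) X` is `d v - (2 c v (d - 2) - c²) E[1 / ‖X‖²]`, which is
smallest at `c = (d - 2) v`.
-/

section ProductMeasure

open Function

variable {ι : Type*} [Fintype ι] [DecidableEq ι] {α : ι → Type*} [∀ i, MeasurableSpace (α i)]
  {μ : ∀ i, Measure (α i)} [∀ i, SigmaFinite (μ i)]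

theorem measurePreserving_update (j : ι) [IsProbabilityMeasure (μ j)] :
    MeasurePreserving (fun z : (∀ i, α i) × α j ↦ update z.1 j z.2)
      ((Measure.pi μ).prod (μ j)) (Measure.pi μ) := by
  have hmeas : Measurable fun z : (∀ i, α i) × α j ↦ update z.1 j z.2 := measurable_update'
  refine ⟨hmeas, (Measure.pi_eq fun s hs ↦ ?_).symm⟩
  have hpre : (fun z : (∀ i, α i) × α j ↦ update z.1 j z.2) ⁻¹' Set.univ.pi s
      = Set.univ.pi (update s j Set.univ) ×ˢ s j := by
    ext ⟨x, t⟩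
    simp only [Set.mem_preimage, Set.mem_prod, Set.mem_univ_pi]
    rw [forall_update_iff x fun i y ↦ y ∈ s i,
      forall_update_iff s fun i u ↦ x i ∈ u]
    simp [and_comm]
  rw [Measure.map_apply hmeas (.univ_pi hs), hpre, Measure.prod_prod, Measure.pi_pi,
    Fintype.prod_eq_mul_prod_compl j, Fintype.prod_eq_mul_prod_compl j, update_self, measure_univ,
    one_mul, mul_comm]
  congr 1
  refine Finset.prod_congr rfl fun i hi ↦ ?_
  rw [update_of_ne (by simpa using hi)]

variable {E : Type*} [NormedAddCommGroup E] {f : (∀ i, α i) → E}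

theorem ae_integrable_comp_update (j : ι) [IsProbabilityMeasure (μ j)]
    (hf : Integrable f (Measure.pi μ)) :
    ∀ᵐ x ∂Measure.pi μ, Integrable (fun t ↦ f (update x j t)) (μ j) :=
  ((measurePreserving_update j).integrable_comp_of_integrable hf).prod_right_ae

theorem integral_pi_eq_integral_integral_update [NormedSpace ℝ E] (j : ι)
    [IsProbabilityMeasure (μ j)] (hf : Integrable f (Measure.pi μ)) :
    ∫ x, f x ∂Measure.pi μ = ∫ x, ∫ t, f (update x j t) ∂μ j ∂Measure.pi μ := by
  have hmp := measurePreserving_update (μ := μ) j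
  calc ∫ x, f x ∂Measure.pi μ
      = ∫ z, f (update z.1 j z.2) ∂(Measure.pi μ).prod (μ j) := by
        rw [← integral_map hmp.aemeasurable (hmp.map_eq.symm ▸ hf.aestronglyMeasurable),
          hmp.map_eq]
    _ = ∫ x, ∫ t, f (update x j t) ∂μ j ∂Measure.pi μ :=
        integral_prod _ (hmp.integrable_comp_of_integrable hf)

end ProductMeasure

section SteinIdentity

variable {m : ℝ} {v : NNReal}

theorem hasDerivAt_gaussianPDFReal (m : ℝ) (v : NNReal) (x : ℝ) :
    HasDerivAt (gaussianPDFReal m v) (-((x - m) / v) * gaussianPDFReal m v x) x := by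
  have hexponent : HasDerivAt (fun x : ℝ ↦ -(x - m) ^ 2 / (2 * v)) (-((x - m) / v)) x :=
    ((((hasDerivAt_id x).sub_const m).fun_pow 2).fun_neg.div_const (2 * (v : ℝ))).congr_deriv
      (by simp only [id_eq]; ring)
  rw [gaussianPDFReal_def]
  exact (hexponent.exp.const_mul _).congr_deriv (by ring)

theorem integrable_gaussianReal_iff {E : Type*} [NormedAddCommGroup E] [NormedSpace ℝ E]
    (hv : v ≠ 0) {f : ℝ → E} :
    Integrable f (gaussianReal m v) ↔ Integrable (fun x ↦ gaussianPDFReal m v x • f x) := by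
  rw [gaussianReal_of_var_ne_zero _ hv, integrable_withDensity_iff_integrable_smul'
    (measurable_gaussianPDF _ _) (ae_of_all _ fun _ ↦ gaussianPDF_lt_top)]
  simp only [toReal_gaussianPDF]

theorem integral_sub_mul_gaussianReal {f f' : ℝ → ℝ} (hderiv : ∀ x, HasDerivAt f (f' x) x)
    (hf : Integrable f (gaussianReal m v)) (hf' : Integrable f' (gaussianReal m v))
    (hxf : Integrable (fun x ↦ (x - m) * f x) (gaussianReal m v)) :
    ∫ x, (x - m) * f x ∂gaussianReal m v = v * ∫ x, f' x ∂gaussianReal m v := by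
  obtain rfl | hv := eq_or_ne v 0
  · simp
  rw [integrable_gaussianReal_iff hv] at hf hf' hxf
  have hv₀ : (v : ℝ) ≠ 0 := NNReal.coe_ne_zero.2 hv
  have hparts := integral_mul_deriv_eq_deriv_mul_of_integrable (fun x _ ↦ hderiv x)
    (fun x _ ↦ hasDerivAt_gaussianPDFReal m v x)
    ((hxf.const_mul (-(v : ℝ)⁻¹)).congr
      (ae_of_all _ fun x ↦ by simp only [smul_eq_mul, Pi.mul_apply]; ring))
    (hf'.congr (ae_of_all _ fun x ↦ mul_comm _ _))
    (hf.congr (ae_of_all _ fun x ↦ mul_comm _ _))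
  simp only [integral_gaussianReal_eq_integral_smul hv, smul_eq_mul]
  calc ∫ x, gaussianPDFReal m v x * ((x - m) * f x)
      = -v * ∫ x, f x * (-((x - m) / v) * gaussianPDFReal m v x) := by
        rw [← integral_const_mul]
        congr 1 with x
        field_simp
    _ = v * ∫ x, gaussianPDFReal m v x * f' x := by
        simp only [hparts, mul_comm (f' _)]
        ring

variable {ι : Type*} [Fintype ι] [DecidableEq ι] {μ : ι → Measure ℝ} [∀ i, SigmaFinite (μ i)]

theorem integral_sub_mul_pi_of_eq_gaussianReal {j : ι} (hj : μ j = gaussianReal m v)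
    {f f' : (ι → ℝ) → ℝ}
    (hderiv : ∀ᵐ x ∂Measure.pi μ, ∀ t,
      HasDerivAt (fun s ↦ f (Function.update x j s)) (f' (Function.update x j t)) t)
    (hf : Integrable f (Measure.pi μ)) (hf' : Integrable f' (Measure.pi μ))
    (hxf : Integrable (fun x ↦ (x j - m) * f x) (Measure.pi μ)) :
    ∫ x, (x j - m) * f x ∂Measure.pi μ = v * ∫ x, f' x ∂Measure.pi μ := by
  have : IsProbabilityMeasure (μ j) := hj ▸ inferInstance
  rw [integral_pi_eq_integral_integral_update j hxf, integral_pi_eq_integral_integral_update j hf',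
    ← integral_const_mul]
  refine integral_congr_ae ?_
  filter_upwards [hderiv, ae_integrable_comp_update j hf, ae_integrable_comp_update j hf',
    ae_integrable_comp_update j hxf] with x hderiv hf hf' hxf
  simp only [Function.update_self, hj] at hf hf' hxf ⊢
  exact integral_sub_mul_gaussianReal hderiv hf hf' hxf

end SteinIdentity

section InverseMoment

theorem integrable_norm_rpow_neg_of_le_smul_addHaar {E : Type*} [NormedAddCommGroup E]
    [NormedSpace ℝ E] [FiniteDimensional ℝ E] [MeasurableSpace E] [BorelSpace E]
    {μ ν : Measure E} [IsFiniteMeasure μ] [ν.IsAddHaarMeasure] {c : ENNReal} (hc : c ≠ ⊤)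
    (hμ : μ ≤ c • ν) {α : ℝ} (hα₀ : 0 ≤ α) (hα : α < Module.finrank ℝ E) :
    Integrable (fun x ↦ ‖x‖ ^ (-α)) μ := by
  have hdim : 1 ≤ Module.finrank ℝ E := by exact_mod_cast hα₀.trans_lt hα
  have hmeas : Measurable fun x : E ↦ ‖x‖ ^ (-α) := by fun_prop
  have hball : IntegrableOn (fun x : E ↦ ‖x‖ ^ (-α)) (Metric.ball 0 1) ν :=
    integrableOn_ball_of_norm_le_rpow (C := 1) hdim hα
      (ae_of_all _ fun x ↦ by rw [one_mul, Real.norm_of_nonneg (by positivity)])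
      hmeas.aestronglyMeasurable
  have hnear : Integrable ((Metric.ball 0 1).indicator fun x : E ↦ ‖x‖ ^ (-α)) μ :=
    (hball.integrable_indicator measurableSet_ball).of_measure_le_smul hc hμ
  refine (hnear.add (integrable_const 1)).mono' hmeas.aestronglyMeasurable (ae_of_all _ fun x ↦ ?_)
  rw [Real.norm_of_nonneg (by positivity), Pi.add_apply]
  by_cases hx : x ∈ Metric.ball 0 1
  · simp [hx]
  · have hx_one : 1 ≤ ‖x‖ := by simpa using hx
    simpa [hx] using Real.rpow_le_one_of_one_le_of_nonpos hx_one (neg_nonpos.2 hα₀)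

theorem gaussianReal_le_smul_volume (m : ℝ) {v : NNReal} (hv : v ≠ 0) :
    gaussianReal m v ≤ ENNReal.ofReal (√(2 * Real.pi * v))⁻¹ • volume := by
  rw [gaussianReal_of_var_ne_zero _ hv, ← withDensity_const]
  refine withDensity_mono (ae_of_all _ fun x ↦ ENNReal.ofReal_le_ofReal ?_)
  refine mul_le_of_le_one_right (by positivity) (Real.exp_le_one_iff.2 ?_)
  rw [neg_div]
  exact neg_nonpos.2 (by positivity)

variable {ι : Type*} [Fintype ι]

theorem inv_sum_sq_le_inv_card_mul_prod_abs_rpow [Nonempty ι] {x : ι → ℝ} (hx : ∀ i, x i ≠ 0) :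
    (∑ i, x i ^ 2)⁻¹ ≤ (Fintype.card ι : ℝ)⁻¹ * ∏ i, |x i| ^ (-(2 / Fintype.card ι : ℝ)) := by
  have hcard : (0 : ℝ) < Fintype.card ι := by exact_mod_cast Fintype.card_pos
  have hprod : 0 < ∏ i, |x i| ^ (2 / Fintype.card ι : ℝ) :=
    Finset.prod_pos fun i _ ↦ Real.rpow_pos_of_pos (abs_pos.2 (hx i)) _
  have hamgm : ∏ i, |x i| ^ (2 / Fintype.card ι : ℝ) ≤ (Fintype.card ι : ℝ)⁻¹ * ∑ i, x i ^ 2 := by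
    have h := Real.geom_mean_le_arith_mean_weighted Finset.univ
      (fun _ ↦ (Fintype.card ι : ℝ)⁻¹) (fun i ↦ |x i| ^ (2 : ℝ)) (fun _ _ ↦ by positivity)
      (by simp [hcard.ne']) (fun _ _ ↦ by positivity)
    simp only [← Real.rpow_mul (abs_nonneg _), ← div_eq_mul_inv, ← Finset.mul_sum] at h
    simpa only [Real.rpow_two, sq_abs] using h
  simp only [Real.rpow_neg (abs_nonneg _), Finset.prod_inv_distrib]
  rw [← mul_inv]
  refine inv_anti₀ (mul_pos hcard hprod) ?_
  rwa [← le_inv_mul_iff₀ hcard]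

theorem integrable_inv_sum_sq_pi {μ : ι → Measure ℝ} [∀ i, IsFiniteMeasure (μ i)] {c : ENNReal}
    (hc : c ≠ ⊤) (hμ : ∀ i, μ i ≤ c • volume) (hι : 3 ≤ Fintype.card ι) :
    Integrable (fun x ↦ (∑ i, x i ^ 2)⁻¹) (Measure.pi μ) := by
  have : Nonempty ι := Fintype.card_pos_iff.1 (by lia)
  have (i : ι) : NullSingletonClass (μ i) :=
    ⟨fun x ↦ Measure.absolutelyContinuous_of_le_smul (hμ i) (measure_singleton x)⟩
  have hexp : (2 / Fintype.card ι : ℝ) < 1 := by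
    rw [div_lt_one (by positivity)]
    exact_mod_cast hι
  have hfactor (i : ι) : Integrable (fun t : ℝ ↦ |t| ^ (-(2 / Fintype.card ι : ℝ))) (μ i) :=
    integrable_norm_rpow_neg_of_le_smul_addHaar hc (hμ i) (by positivity) (by simpa using hexp)
  refine ((Integrable.fintype_prod hfactor).const_mul (Fintype.card ι : ℝ)⁻¹).mono'
    (Measurable.aestronglyMeasurable (by fun_prop)) ?_
  filter_upwards [ae_all_iff.2 fun i ↦ Measure.ae_eval_ne μ i 0] with x hx
  rw [Real.norm_of_nonneg (by positivity)]
  exact inv_sum_sq_le_inv_card_mul_prod_abs_rpow hx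

theorem integrable_inv_sum_sq_pi_gaussianReal (hι : 3 ≤ Fintype.card ι) {v : NNReal} (hv : v ≠ 0)
    (θ : ι → ℝ) :
    Integrable (fun x ↦ (∑ i, x i ^ 2)⁻¹) (Measure.pi fun i ↦ gaussianReal (θ i) v) :=
  integrable_inv_sum_sq_pi ENNReal.ofReal_ne_top (fun i ↦ gaussianReal_le_smul_volume (θ i) hv) hι

end InverseMoment

section SphereInversion

variable {ι : Type*} [Fintype ι]

theorem sum_sq_pos {x : ι → ℝ} (hx : x ≠ 0) : 0 < ∑ i, x i ^ 2 := by
  obtain ⟨i, hi⟩ := Function.ne_iff.1 hx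
  exact Finset.sum_pos' (fun j _ ↦ sq_nonneg (x j)) ⟨i, Finset.mem_univ i, sq_pos_of_ne_zero hi⟩

/-- The inversion `x ↦ x / ‖x‖²` in the Euclidean unit sphere, sending the origin to itself. The
norm is spelled out as `∑ i, x i ^ 2` because `ι → ℝ` carries the sup norm. -/
noncomputable def sphereInversion (x : ι → ℝ) (j : ι) : ℝ := x j * (∑ i, x i ^ 2)⁻¹

/-- The diagonal partial derivative `∂ⱼ (xⱼ / ‖x‖²) = 1 / ‖x‖² - 2 xⱼ² / ‖x‖⁴` of
`sphereInversion`, set to `0` at the origin. -/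
noncomputable def sphereInversionDeriv (x : ι → ℝ) (j : ι) : ℝ :=
  (∑ i, x i ^ 2)⁻¹ - 2 * (x j ^ 2 * (∑ i, x i ^ 2)⁻¹ * (∑ i, x i ^ 2)⁻¹)

theorem sum_sq_mul_inv_mul_inv (x : ι → ℝ) :
    ∑ j, x j ^ 2 * (∑ i, x i ^ 2)⁻¹ * (∑ i, x i ^ 2)⁻¹ = (∑ i, x i ^ 2)⁻¹ := by
  rw [← Finset.sum_mul, ← Finset.sum_mul]
  simpa only [inv_inv] using inv_mul_mul_self (∑ i, x i ^ 2)⁻¹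

theorem sum_sphereInversion_sq (x : ι → ℝ) :
    ∑ j, sphereInversion x j ^ 2 = (∑ i, x i ^ 2)⁻¹ := by
  rw [← sum_sq_mul_inv_mul_inv x]
  exact Finset.sum_congr rfl fun j _ ↦ by rw [sphereInversion]; ring

theorem sum_sphereInversionDeriv (x : ι → ℝ) :
    ∑ j, sphereInversionDeriv x j = ((Fintype.card ι : ℝ) - 2) * (∑ i, x i ^ 2)⁻¹ := by
  simp only [sphereInversionDeriv]
  rw [Finset.sum_sub_distrib, ← Finset.mul_sum, sum_sq_mul_inv_mul_inv, Finset.sum_const,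
    Finset.card_univ, nsmul_eq_mul]
  ring

theorem hasDerivAt_sphereInversion_update [DecidableEq ι] {x : ι → ℝ} {j : ι} {t : ℝ}
    (hx : Function.update x j t ≠ 0) :
    HasDerivAt (fun s ↦ sphereInversion (Function.update x j s) j)
      (sphereInversionDeriv (Function.update x j t) j) t := by
  have hsum (s : ℝ) : ∑ i, Function.update x j s i ^ 2 = s ^ 2 + ∑ i ∈ {j}ᶜ, x i ^ 2 := by
    rw [Fintype.sum_eq_add_sum_compl j, Function.update_self]
    congr 1
    exact Finset.sum_congr rfl fun i hi ↦ by rw [Function.update_of_ne (by simpa using hi)]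
  have hsum_ne : t ^ 2 + ∑ i ∈ {j}ᶜ, x i ^ 2 ≠ 0 := by
    rw [← hsum]
    exact (sum_sq_pos hx).ne'
  simp only [sphereInversion, sphereInversionDeriv, hsum, Function.update_self]
  refine ((hasDerivAt_id t).fun_mul
    (((hasDerivAt_pow 2 t).add_const _).fun_inv hsum_ne)).congr_deriv ?_
  simp only [id_eq]
  field_simp
  ring

theorem norm_sq_mul_inv_sum_sq_le_one (x : ι → ℝ) (j : ι) :
    ‖x j ^ 2 * (∑ i, x i ^ 2)⁻¹‖ ≤ 1 := by
  rw [Real.norm_of_nonneg (by positivity), ← div_eq_mul_inv]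
  exact div_le_one_of_le₀
    (Finset.single_le_sum (fun i _ ↦ sq_nonneg (x i)) (Finset.mem_univ j)) (by positivity)

theorem norm_sphereInversion_le (x : ι → ℝ) (j : ι) :
    ‖sphereInversion x j‖ ≤ (∑ i, x i ^ 2)⁻¹ + 1 := by
  have hinv : 0 ≤ (∑ i, x i ^ 2)⁻¹ := by positivity
  have habs : |x j| ≤ 1 + x j ^ 2 := by
    nlinarith [sq_nonneg (|x j| - 1), abs_nonneg (x j), sq_abs (x j)]
  rw [sphereInversion, norm_mul, Real.norm_eq_abs, Real.norm_of_nonneg hinv]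
  linarith [mul_le_mul_of_nonneg_right habs hinv, le_of_abs_le (norm_sq_mul_inv_sum_sq_le_one x j)]

variable {P : Measure (ι → ℝ)}

theorem integral_inv_sum_sq_pos [NeZero P] (hP : Integrable (fun x ↦ (∑ i, x i ^ 2)⁻¹) P)
    (hne : ∀ᵐ x ∂P, x ≠ 0) : 0 < ∫ x, (∑ i, x i ^ 2)⁻¹ ∂P := by
  rw [integral_pos_iff_support_of_nonneg (fun x ↦ by positivity) hP, pos_iff_ne_zero]
  exact frequently_ae_iff.1 (hne.mono fun x hx ↦ (inv_pos.2 (sum_sq_pos hx)).ne').frequently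

theorem integrable_sphereInversionDeriv (hP : Integrable (fun x ↦ (∑ i, x i ^ 2)⁻¹) P) (j : ι) :
    Integrable (fun x ↦ sphereInversionDeriv x j) P :=
  hP.sub ((hP.bdd_mul (Measurable.aestronglyMeasurable (by fun_prop))
    (ae_of_all _ fun x ↦ norm_sq_mul_inv_sum_sq_le_one x j)).const_mul 2)

variable [IsFiniteMeasure P]

theorem integrable_sphereInversion (hP : Integrable (fun x ↦ (∑ i, x i ^ 2)⁻¹) P) (j : ι) :
    Integrable (fun x ↦ sphereInversion x j) P :=
  (hP.add (integrable_const 1)).mono'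
    (Measurable.aestronglyMeasurable (by unfold sphereInversion; fun_prop))
    (ae_of_all _ fun x ↦ norm_sphereInversion_le x j)

theorem integrable_sub_mul_sphereInversion (hP : Integrable (fun x ↦ (∑ i, x i ^ 2)⁻¹) P) (j : ι)
    (a : ℝ) : Integrable (fun x ↦ (x j - a) * sphereInversion x j) P := by
  have hsq : Integrable (fun x ↦ x j ^ 2 * (∑ i, x i ^ 2)⁻¹) P :=
    .of_bound (Measurable.aestronglyMeasurable (by fun_prop)) 1
      (ae_of_all _ fun x ↦ norm_sq_mul_inv_sum_sq_le_one x j)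
  refine (hsq.sub ((integrable_sphereInversion hP j).const_mul a)).congr (ae_of_all _ fun x ↦ ?_)
  simp only [Pi.sub_apply, sphereInversion]
  ring

end SphereInversion

section Risk

variable {ι : Type*} [Fintype ι] {v : NNReal}

theorem integrable_sub_sq_gaussianReal (m : ℝ) (v : NNReal) :
    Integrable (fun x ↦ (x - m) ^ 2) (gaussianReal m v) :=
  ((memLp_id_gaussianReal 2).sub (memLp_const m)).integrable_sq

theorem integral_sub_sq_gaussianReal (m : ℝ) (v : NNReal) :
    ∫ x, (x - m) ^ 2 ∂gaussianReal m v = v := by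
  rw [← variance_fun_id_gaussianReal (μ := m) (v := v), variance_eq_integral (by fun_prop),
    integral_id_gaussianReal]

theorem integrable_sub_sq_pi_gaussianReal (v : NNReal) (θ : ι → ℝ) (j : ι) :
    Integrable (fun x ↦ (x j - θ j) ^ 2) (Measure.pi fun i ↦ gaussianReal (θ i) v) :=
  (measurePreserving_eval (fun i ↦ gaussianReal (θ i) v) j).integrable_comp_of_integrable
    (integrable_sub_sq_gaussianReal (θ j) v)

theorem integral_sub_sq_pi_gaussianReal (v : NNReal) (θ : ι → ℝ) (j : ι) :
    ∫ x, (x j - θ j) ^ 2 ∂(Measure.pi fun i ↦ gaussianReal (θ i) v) = v := by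
  rw [integral_comp_eval (μ := fun i ↦ gaussianReal (θ i) v) (f := fun t ↦ (t - θ j) ^ 2)
    (integrable_sub_sq_gaussianReal (θ j) v).aestronglyMeasurable, integral_sub_sq_gaussianReal]

theorem integral_sum_sub_sq_pi_gaussianReal (v : NNReal) (θ : ι → ℝ) :
    ∫ x, ∑ j, (x j - θ j) ^ 2 ∂(Measure.pi fun i ↦ gaussianReal (θ i) v)
      = Fintype.card ι * v := by
  rw [integral_finsetSum _ fun j _ ↦ integrable_sub_sq_pi_gaussianReal v θ j]
  simp only [integral_sub_sq_pi_gaussianReal, Finset.sum_const, Finset.card_univ, nsmul_eq_mul]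

theorem ae_eval_ne_pi_gaussianReal (hv : v ≠ 0) (θ : ι → ℝ) (k : ι) (a : ℝ) :
    ∀ᵐ x ∂(Measure.pi fun i ↦ gaussianReal (θ i) v), x k ≠ a :=
  have := nullSingletonClass_gaussianReal (μ := θ k) hv
  Measure.ae_eval_ne (fun i ↦ gaussianReal (θ i) v) k a

theorem integral_sub_mul_sphereInversion (hι : 3 ≤ Fintype.card ι) (hv : v ≠ 0) (θ : ι → ℝ)
    (j : ι) :
    ∫ x, (x j - θ j) * sphereInversion x j ∂(Measure.pi fun i ↦ gaussianReal (θ i) v)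
      = v * ∫ x, sphereInversionDeriv x j ∂(Measure.pi fun i ↦ gaussianReal (θ i) v) := by
  classical
  have hinv := integrable_inv_sum_sq_pi_gaussianReal hι hv θ
  have : Nontrivial ι := Fintype.one_lt_card_iff_nontrivial.1 (by lia)
  obtain ⟨k, hkj⟩ := exists_ne j
  refine integral_sub_mul_pi_of_eq_gaussianReal (μ := fun i ↦ gaussianReal (θ i) v) rfl ?_
    (integrable_sphereInversion hinv j) (integrable_sphereInversionDeriv hinv j)
    (integrable_sub_mul_sphereInversion hinv j (θ j))
  -- A line in direction `j` avoids the origin as soon as another coordinate `k` is nonzero on it.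
  filter_upwards [ae_eval_ne_pi_gaussianReal hv θ k 0] with x hxk t
  refine hasDerivAt_sphereInversion_update fun h ↦ hxk ?_
  rw [← Function.update_of_ne hkj t x, h, Pi.zero_apply]

theorem integral_sum_sub_mul_sphereInversion (hι : 3 ≤ Fintype.card ι) (hv : v ≠ 0) (θ : ι → ℝ) :
    ∫ x, ∑ j, (x j - θ j) * sphereInversion x j ∂(Measure.pi fun i ↦ gaussianReal (θ i) v)
      = v * (((Fintype.card ι : ℝ) - 2)
        * ∫ x, (∑ i, x i ^ 2)⁻¹ ∂(Measure.pi fun i ↦ gaussianReal (θ i) v)) := by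
  have hinv := integrable_inv_sum_sq_pi_gaussianReal hι hv θ
  rw [integral_finsetSum _ fun j _ ↦ integrable_sub_mul_sphereInversion hinv j (θ j)]
  simp only [integral_sub_mul_sphereInversion hι hv]
  rw [← Finset.mul_sum, ← integral_finsetSum _ fun j _ ↦ integrable_sphereInversionDeriv hinv j]
  simp only [sum_sphereInversionDeriv, integral_const_mul]

theorem sum_shrinkage_sub_sq (c : ℝ) (x θ : ι → ℝ) :
    ∑ j, ((1 - c / ∑ i, x i ^ 2) * x j - θ j) ^ 2
      = ∑ j, (x j - θ j) ^ 2 - 2 * c * ∑ j, (x j - θ j) * sphereInversion x j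
        + c ^ 2 * (∑ i, x i ^ 2)⁻¹ := by
  rw [← sum_sphereInversion_sq, Finset.mul_sum, Finset.mul_sum, ← Finset.sum_sub_distrib,
    ← Finset.sum_add_distrib]
  refine Finset.sum_congr rfl fun j _ ↦ ?_
  rw [sphereInversion]
  ring

theorem integral_sum_shrinkage_sub_sq (hι : 3 ≤ Fintype.card ι) (hv : v ≠ 0) (θ : ι → ℝ) (c : ℝ) :
    ∫ x, ∑ j, ((1 - c / ∑ i, x i ^ 2) * x j - θ j) ^ 2
        ∂(Measure.pi fun i ↦ gaussianReal (θ i) v)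
      = Fintype.card ι * v - (2 * c * v * ((Fintype.card ι : ℝ) - 2) - c ^ 2)
        * ∫ x, (∑ i, x i ^ 2)⁻¹ ∂(Measure.pi fun i ↦ gaussianReal (θ i) v) := by
  have hinv := integrable_inv_sum_sq_pi_gaussianReal hι hv θ
  have hloss := integrable_finsetSum Finset.univ fun j _ ↦ integrable_sub_sq_pi_gaussianReal v θ j
  have hcross := (integrable_finsetSum Finset.univ fun j _ ↦
    integrable_sub_mul_sphereInversion hinv j (θ j)).const_mul (2 * c)
  simp only [sum_shrinkage_sub_sq]
  rw [integral_add (by exact hloss.sub hcross) (hinv.const_mul _), integral_sub hloss hcross,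
    integral_const_mul, integral_const_mul, integral_sum_sub_sq_pi_gaussianReal,
    integral_sum_sub_mul_sphereInversion hι hv]
  ring

theorem integral_inv_sum_sq_pi_gaussianReal_pos (hι : 3 ≤ Fintype.card ι) (hv : v ≠ 0)
    (θ : ι → ℝ) :
    0 < ∫ x, (∑ i, x i ^ 2)⁻¹ ∂(Measure.pi fun i ↦ gaussianReal (θ i) v) := by
  obtain ⟨k⟩ : Nonempty ι := Fintype.card_pos_iff.1 (by lia)
  refine integral_inv_sum_sq_pos (integrable_inv_sum_sq_pi_gaussianReal hι hv θ) ?_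
  filter_upwards [ae_eval_ne_pi_gaussianReal hv θ k 0] with x hx
  exact Function.ne_iff.2 ⟨k, hx⟩

end Risk

/-- James–Stein: for `X ~ N(θ, σ²I_d)` in `ℝᵈ`, `d ≥ 3`, the estimator
`δ_JS(X) = (1 - (d-2)σ²/‖X‖²)X` has risk
`dσ² - (d-2)²σ⁴ E[1/‖X‖²] < dσ² = E[‖X-θ‖²]` for every `θ`;
hence `δ(X) = X` is inadmissible under squared error loss. -/
theorem james_stein_dominates
    (d : ℕ) (hd : 3 ≤ d) (σ : NNReal) (hσ : 0 < σ) (θ : Fin d → ℝ)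
    (P : Measure (Fin d → ℝ))
    (hP : P = Measure.pi fun i => gaussianReal (θ i) (σ ^ 2))
    (δJS : (Fin d → ℝ) → Fin d → ℝ)
    (hδJS : δJS = fun x j =>
      (1 - ((d : ℝ) - 2) * (σ : ℝ) ^ 2 / ∑ i, x i ^ 2) * x j) :
    (∫ x, ∑ j, (δJS x j - θ j) ^ 2 ∂P)
        = (d : ℝ) * (σ : ℝ) ^ 2
          - ((d : ℝ) - 2) ^ 2 * (σ : ℝ) ^ 4 * ∫ x, (∑ i, x i ^ 2)⁻¹ ∂P ∧
    (∫ x, ∑ j, (δJS x j - θ j) ^ 2 ∂P) < (d : ℝ) * (σ : ℝ) ^ 2 ∧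
    (∫ x, ∑ j, (x j - θ j) ^ 2 ∂P) = (d : ℝ) * (σ : ℝ) ^ 2 := by
  subst hP hδJS
  have hι : 3 ≤ Fintype.card (Fin d) := by rwa [Fintype.card_fin]
  have hv : σ ^ 2 ≠ 0 := pow_ne_zero 2 hσ.ne'
  have hd₂ : (0 : ℝ) < d - 2 := sub_pos.2 (by exact_mod_cast hd)
  have hinv_pos := integral_inv_sum_sq_pi_gaussianReal_pos hι hv θ
  have hrisk := integral_sum_shrinkage_sub_sq hι hv θ (((d : ℝ) - 2) * (σ : ℝ) ^ 2)
  have hrisk_id := integral_sum_sub_sq_pi_gaussianReal (σ ^ 2) θ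
  rw [Fintype.card_fin] at hrisk hrisk_id
  push_cast at hrisk hrisk_id
  have hrisk_JS := hrisk.trans (by ring : _ = (d : ℝ) * (σ : ℝ) ^ 2
    - ((d : ℝ) - 2) ^ 2 * (σ : ℝ) ^ 4
      * ∫ x, (∑ i, x i ^ 2)⁻¹ ∂(Measure.pi fun i ↦ gaussianReal (θ i) (σ ^ 2)))
  refine ⟨hrisk_JS, hrisk_JS.trans_lt (sub_lt_self _ ?_), hrisk_id⟩
  positivity
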